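/- Let R be a local ring and let N be a finitely generated R-module. If N has finite length, or N is a syzygy of some finite length R-module, then [N] = 0 in Ḡ(R)_ℚ. -/

import Mathlib

open CategoryTheory Opposite Filter IsLocalRing

universe u

noncomputable section

/-- A bundled finitely generated `R`-module. -/
structure FGMod (R : Type u) [CommRing R] : Type (u + 1) where
  carrier : Type u
  [addCommGroup : AddCommGroup carrier]
  [module : Module R carrier]
  [finite : Module.Finite R carrier]

attribute [instance] FGMod.addCommGroup FGMod.module FGMod.finite

/-- The subgroup of relations coming from short exact sequences of finitely generated
modules. -/
def grothRelations (R : Type u) [CommRing R] : AddSubgroup (FreeAbelianGroup (FGMod R)) :=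
  AddSubgroup.closure {x | ∃ (A B C : FGMod R) (f : A.carrier →ₗ[R] B.carrier)
    (g : B.carrier →ₗ[R] C.carrier),
    Function.Injective f ∧ Function.Surjective g ∧ LinearMap.range f = LinearMap.ker g ∧
    x = FreeAbelianGroup.of B - FreeAbelianGroup.of A - FreeAbelianGroup.of C}

/-- The Grothendieck group `G(R)` of finitely generated `R`-modules. -/
def GrothGroup (R : Type u) [CommRing R] : Type (u + 1) :=
  FreeAbelianGroup (FGMod R) ⧸ grothRelations R

instance (R : Type u) [CommRing R] : AddCommGroup (GrothGroup R) :=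
  QuotientAddGroup.Quotient.addCommGroup _

/-- The class `[M]` of a finitely generated module in `G(R)`. -/
def grothClass (R : Type u) [CommRing R] (M : Type u) [AddCommGroup M] [Module R M]
    [Module.Finite R M] : GrothGroup R :=
  QuotientAddGroup.mk (FreeAbelianGroup.of (FGMod.mk (R := R) M))

/-- `[N] = 0` in the rationalized reduced Grothendieck group `Ḡ(R)_ℚ`; equivalently, some
nonzero integer multiple of `[N]` lies in `ℤ·[R] ⊆ G(R)`. -/
def VanishesInReducedGrothQ (R : Type u) [CommRing R] (N : Type u) [AddCommGroup N]
    [Module R N] [Module.Finite R N] : Prop :=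
  ∃ a b : ℤ, a ≠ 0 ∧ a • grothClass R N = b • grothClass R R

/-- The reduced Grothendieck group `Ḡ(R) = G(R)/ℤ·[R]`. -/
def ReducedGroth (R : Type u) [CommRing R] : Type (u + 1) :=
  GrothGroup R ⧸ AddSubgroup.zmultiples (grothClass R R)

instance (R : Type u) [CommRing R] : AddCommGroup (ReducedGroth R) :=
  QuotientAddGroup.Quotient.addCommGroup _

/-- `Ḡ(R)_ℚ = Ḡ(R) ⊗_ℤ ℚ`. -/
def ReducedGrothQ (R : Type u) [CommRing R] : Type (u + 1) :=
  TensorProduct ℤ ℚ (ReducedGroth R)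

instance (R : Type u) [CommRing R] : AddCommGroup (ReducedGrothQ R) :=
  TensorProduct.addCommGroup

/-- `NthSyzygy R k N X` : `N` is a `k`-th syzygy of `X`, i.e. there are surjections from
finitely generated free modules `F₁ ↠ X`, `F₂ ↠ ker(F₁ ↠ X)`, … such that `N` is
isomorphic to the `k`-th kernel. -/
def NthSyzygy (R : Type u) [CommRing R] :
    ℕ → ∀ (N : Type u) [AddCommGroup N] [Module R N],
      ∀ (X : Type u) [AddCommGroup X] [Module R X], Prop
  | 0 => fun N _ _ X _ _ => Nonempty (N ≃ₗ[R] X)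
  | k + 1 => fun N _ _ X _ _ => ∃ (F : Type u) (_ : AddCommGroup F) (_ : Module R F)
      (_ : Module.Free R F) (_ : Module.Finite R F) (g : F →ₗ[R] X),
      Function.Surjective g ∧ NthSyzygy R k N (LinearMap.ker g)

theorem gc_ses {R : Type u} [CommRing R] {A B C : Type u} [AddCommGroup A] [Module R A]
    [Module.Finite R A] [AddCommGroup B] [Module R B] [Module.Finite R B] [AddCommGroup C]
    [Module R C] [Module.Finite R C] (f : A →ₗ[R] B) (g : B →ₗ[R] C)
    (hf : Function.Injective f) (hg : Function.Surjective g)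
    (h : LinearMap.range f = LinearMap.ker g) :
    grothClass R B = grothClass R A + grothClass R C := by
  have : FreeAbelianGroup.of (FGMod.mk (R := R) B) - FreeAbelianGroup.of (FGMod.mk (R := R) A)
      - FreeAbelianGroup.of (FGMod.mk (R := R) C) ∈ grothRelations R :=
    AddSubgroup.subset_closure ⟨FGMod.mk A, FGMod.mk B, FGMod.mk C, f, g, hf, hg, h, rfl⟩
  have h2 := (QuotientAddGroup.eq_zero_iff _).2 this
  have h3 : grothClass R B - grothClass R A - grothClass R C = 0 := h2
  rw [sub_sub, sub_eq_zero] at h3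
  exact h3

theorem gc_zero {R : Type u} [CommRing R] (A : Type u) [AddCommGroup A] [Module R A]
    [Module.Finite R A] [Subsingleton A] : grothClass R A = 0 := by
  have := gc_ses (R := R) (LinearMap.id : A →ₗ[R] A) (LinearMap.id : A →ₗ[R] A)
    Function.injective_id Function.surjective_id
    (Subsingleton.elim _ _)
  simpa using this

theorem gc_iso {R : Type u} [CommRing R] {A B : Type u} [AddCommGroup A] [Module R A]
    [Module.Finite R A] [AddCommGroup B] [Module R B] [Module.Finite R B] (e : A ≃ₗ[R] B) :
    grothClass R A = grothClass R B := by
  have := gc_ses (R := R) e.toLinearMap (0 : B →ₗ[R] PUnit.{u+1})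
    e.injective (fun x => ⟨0, Subsingleton.elim _ _⟩) (by simp)
  rw [this, gc_zero PUnit, add_zero]

theorem gc_sub {R : Type u} [CommRing R] [IsNoetherianRing R] {B : Type u} [AddCommGroup B]
    [Module R B] [Module.Finite R B] (S : Submodule R B) :
    grothClass R B = grothClass R S + grothClass R (B ⧸ S) :=
  gc_ses S.subtype S.mkQ S.injective_subtype S.mkQ_surjective (by simp)

theorem gc_ker {R : Type u} [CommRing R] [IsNoetherianRing R] {B C : Type u} [AddCommGroup B]
    [Module R B] [Module.Finite R B] [AddCommGroup C] [Module R C] [Module.Finite R C]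
    (g : B →ₗ[R] C) (hg : Function.Surjective g) :
    grothClass R B = grothClass R (LinearMap.ker g) + grothClass R C :=
  gc_ses (LinearMap.ker g).subtype g (Submodule.injective_subtype _) hg (by simp)

theorem gc_fin (R : Type u) [CommRing R] (n : ℕ) :
    grothClass R (Fin n → R) = n • grothClass R R := by
  induction n with
  | zero => rw [gc_zero, zero_smul]
  | succ n ih =>
    rw [← gc_iso (Fin.consLinearEquiv R (fun _ : Fin (n+1) => R)),
      gc_ses (LinearMap.inl R R (Fin n → R)) (LinearMap.snd R R (Fin n → R))
      LinearMap.inl_injective LinearMap.snd_surjective (LinearMap.range_inl R R (Fin n → R)), ih,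
      succ_nsmul']

theorem gc_free (R : Type u) [CommRing R] [Nontrivial R] (F : Type u) [AddCommGroup F] [Module R F]
    [Module.Finite R F] [Module.Free R F] : ∃ n : ℕ, grothClass R F = n • grothClass R R :=
  ⟨_, (gc_iso (Module.finBasis R F).equivFun).trans (gc_fin R _)⟩

theorem gc_finlen {R : Type u} [CommRing R] [IsLocalRing R] [IsNoetherianRing R]
    {N : Type u} [AddCommGroup N] [Module R N] (h : IsFiniteLength R N) :
    ∀ [Module.Finite R N], ∃ n : ℕ, (Nontrivial N → n ≠ 0) ∧
      grothClass R N = n • grothClass R (R ⧸ maximalIdeal R) := by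
  induction h with
  | @of_subsingleton M _ _ _ =>
    intro _
    refine ⟨0, fun h => ?_, by rw [gc_zero, zero_smul]⟩
    exact (not_subsingleton M inferInstance).elim
  | @of_simple_quotient M _ _ N _ _ ih =>
    intro _
    obtain ⟨n, -, hn⟩ := ih
    obtain ⟨I, hI, ⟨e⟩⟩ := (isSimpleModule_iff_quot_maximal (R := R) (M := M ⧸ N)).1 inferInstance
    obtain rfl := IsLocalRing.eq_maximalIdeal hI
    refine ⟨n + 1, fun _ => by omega, ?_⟩
    rw [gc_sub N, hn, gc_iso e, succ_nsmul]

theorem gc_residue (R : Type u) [CommRing R] [IsLocalRing R] [IsNoetherianRing R] :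
    ∃ a b : ℤ, a ≠ 0 ∧ a • grothClass R (R ⧸ maximalIdeal R) = b • grothClass R R := by
  by_cases hR : IsFiniteLength R R
  · obtain ⟨n, hn, h⟩ := gc_finlen hR
    exact ⟨n, 1, by simpa using hn inferInstance, by rw [h]; simp⟩
  have hne : {I : Submodule R R | ¬ IsFiniteLength R (R ⧸ I)}.Nonempty :=
    ⟨⊥, fun h => hR ((Submodule.quotEquivOfEqBot ⊥ rfl).isFiniteLength h)⟩
  obtain ⟨I, hI, hmax⟩ := set_has_maximal_iff_noetherian.2 ‹IsNoetherianRing R› _ hne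
  have hmax' : ∀ J : Submodule R R, I < J → IsFiniteLength R (R ⧸ J) := fun J hJ => by
    by_contra h
    exact hmax J h hJ
  have hI1 : I ≠ ⊤ := by
    rintro rfl
    exact hI (.of_subsingleton)
  have hIm : I ≤ maximalIdeal R := IsLocalRing.le_maximalIdeal hI1
  have hIm' : I ≠ maximalIdeal R := by
    intro h
    apply hI
    rw [isFiniteLength_iff_isNoetherian_isArtinian]
    have : IsSimpleModule R (R ⧸ I) :=
      (isSimpleModule_iff_quot_maximal).2 ⟨maximalIdeal R, inferInstance,
        ⟨Submodule.quotEquivOfEq _ _ h⟩⟩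
    exact ⟨inferInstance, inferInstance⟩
  obtain ⟨x, hxm, hxI⟩ := SetLike.exists_of_lt (lt_of_le_of_ne hIm hIm')
  let f : (R ⧸ I) →ₗ[R] (R ⧸ I) := LinearMap.lsmul R (R ⧸ I) x
  have hf : ∀ r : R, f (I.mkQ r) = I.mkQ (x * r) := fun r =>
    (map_smul I.mkQ x r).symm
  let q := (LinearMap.range f).mkQ ∘ₗ I.mkQ
  have hq : Function.Surjective q :=
    (Submodule.mkQ_surjective _).comp (Submodule.mkQ_surjective _)
  have hQ : IsFiniteLength R ((R ⧸ I) ⧸ LinearMap.range f) := by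
    refine (q.quotKerEquivOfSurjective hq).isFiniteLength (hmax' _ ?_)
    refine SetLike.lt_iff_le_and_exists.2 ⟨?_, x, ?_, hxI⟩
    · intro y hy
      have : I.mkQ y = 0 := (Submodule.Quotient.mk_eq_zero I).2 hy
      simp only [q, LinearMap.mem_ker, LinearMap.comp_apply, this, map_zero]
    · have : I.mkQ x ∈ LinearMap.range f := ⟨I.mkQ 1, by rw [hf, mul_one]⟩
      simpa [q] using this
  have hinj : Function.Injective f := by
    by_cases h : I < LinearMap.ker (f ∘ₗ I.mkQ)
    · exfalso
      apply hI
      have h1 := (LinearMap.quotKerEquivRange (f ∘ₗ I.mkQ)).isFiniteLength (hmax' _ h)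
      have h2 : LinearMap.range (f ∘ₗ I.mkQ) = LinearMap.range f := by
        rw [LinearMap.range_comp, Submodule.range_mkQ, Submodule.map_top]
      rw [h2] at h1
      rw [isFiniteLength_iff_isNoetherian_isArtinian] at h1 hQ ⊢
      exact ⟨inferInstance, (isArtinian_iff_submodule_quotient _).2 ⟨h1.2, hQ.2⟩⟩
    · rw [← LinearMap.ker_eq_bot, LinearMap.ker_eq_bot']
      intro y hy
      obtain ⟨y, rfl⟩ := I.mkQ_surjective y
      have hle : I ≤ LinearMap.ker (f ∘ₗ I.mkQ) := by
        intro z hz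
        have : I.mkQ z = 0 := (Submodule.Quotient.mk_eq_zero I).2 hz
        simp only [LinearMap.mem_ker, LinearMap.comp_apply, this, map_zero]
      have : I = LinearMap.ker (f ∘ₗ I.mkQ) := eq_of_le_of_not_lt hle h
      have h3 : y ∈ I := by rw [this]; exact hy
      exact (Submodule.Quotient.mk_eq_zero I).2 h3
  have hnt : Nontrivial ((R ⧸ I) ⧸ LinearMap.range f) := by
    rw [Submodule.Quotient.nontrivial_iff]
    intro h
    have : I.mkQ 1 ∈ LinearMap.range f := h ▸ Submodule.mem_top
    obtain ⟨y, hy⟩ := this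
    obtain ⟨y, rfl⟩ := I.mkQ_surjective y
    rw [hf] at hy
    have h4 : x * y - 1 ∈ I := (Submodule.Quotient.eq I).1 hy
    have h5 := (maximalIdeal R).sub_mem ((maximalIdeal R).mul_mem_right y hxm) (hIm h4)
    rw [sub_sub_cancel] at h5
    exact (Ideal.ne_top_iff_one _).1 (maximalIdeal.isMaximal R).ne_top h5
  obtain ⟨n, hn, h⟩ := gc_finlen hQ
  have h6 := gc_ses f (LinearMap.range f).mkQ hinj (Submodule.mkQ_surjective _) (by simp)
  rw [h, left_eq_add] at h6
  exact ⟨n, 0, by simpa using hn hnt, by simpa using h6⟩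

theorem gc_syz {R : Type u} [CommRing R] [IsLocalRing R] [IsNoetherianRing R]
    (N : Type u) [AddCommGroup N] [Module R N] [Module.Finite R N] (k : ℕ) :
    ∀ (X : Type u) [AddCommGroup X] [Module R X] [Module.Finite R X],
      NthSyzygy R k N X → VanishesInReducedGrothQ R X → VanishesInReducedGrothQ R N := by
  induction k with
  | zero =>
    rintro X _ _ _ ⟨e⟩ ⟨a, b, ha, h⟩
    exact ⟨a, b, ha, by rw [gc_iso e, h]⟩
  | succ k ih =>
    rintro X _ _ _ ⟨F, _, _, _, _, g, hg, hs⟩ ⟨a, b, ha, h⟩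
    refine ih _ hs ?_
    obtain ⟨n, hn⟩ := gc_free R F
    refine ⟨a, a * n - b, ha, ?_⟩
    have h1 := gc_ker g hg
    rw [hn] at h1
    rw [sub_smul, ← h, mul_smul, natCast_zsmul, h1, smul_add, add_sub_cancel_right]

theorem gc_main {R : Type u} [CommRing R] [IsLocalRing R] [IsNoetherianRing R]
    (N : Type u) [AddCommGroup N] [Module R N] [Module.Finite R N] (h : IsFiniteLength R N) :
    VanishesInReducedGrothQ R N := by
  obtain ⟨a, b, ha, hab⟩ := gc_residue R
  obtain ⟨n, -, hn⟩ := gc_finlen h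
  refine ⟨a, n * b, ha, ?_⟩
  rw [hn, mul_smul, ← hab, natCast_zsmul, smul_comm]

theorem herbrand_stmt1 (R : Type u) [CommRing R] [IsLocalRing R] [IsNoetherianRing R]
    (N : Type u) [AddCommGroup N] [Module R N] [Module.Finite R N]
    (h : IsFiniteLength R N ∨ ∃ (X : Type u) (_ : AddCommGroup X) (_ : Module R X)
      (_ : Module.Finite R X), IsFiniteLength R X ∧ ∃ k : ℕ, NthSyzygy R (k + 1) N X) :
    VanishesInReducedGrothQ R N := by
  rcases h with h | ⟨X, _, _, _, hX, k, hk⟩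
  · exact gc_main N h
  · exact gc_syz N (k + 1) X hk (gc_main X hX)
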